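/- (A countermodel claim in modal logic K.) Let q, r be distinct propositional variables. For every N ≥ 0 it is not the case that ⋀_{k=0}^{N} (q → □^k r) ⊢_K q → □^{N+1} r; i.e., there is a Kripke model in which the formula ⋀_{k=0}^{N} (q → □^k r) is forced at every world but q → □^{N+1} r is not forced at some world. -/

import Mathlib

/-! The countermodel is the successor relation on `ℕ`, with `q` true only at `0` and `r` true
exactly at the worlds `w ≤ N`. Since each world has exactly one successor, `□^k a` holds at `w` iff
`a` holds at `w + k` (`lineModel_forces_boxIter`). So every `q → □^k r` with `k ≤ N` holds everywhere
(its only nontrivial instance is at world `0`), whereas `□^(N+1) r` at `0` would require `r` at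
`N + 1`. -/

/-- Modal formulas over variables indexed by `ℕ`. -/
inductive MForm : Type
  | var : ℕ → MForm
  | bot : MForm
  | and : MForm → MForm → MForm
  | imp : MForm → MForm → MForm
  | box : MForm → MForm

/-- The set of propositional variables occurring in a modal formula. -/
def MForm.vars : MForm → Finset ℕ
  | .var p => {p}
  | .bot => ∅
  | .and a b => a.vars ∪ b.vars
  | .imp a b => a.vars ∪ b.vars
  | .box a => a.vars

/-- The k-fold iterate □^k of the box modality. -/
def boxIter : ℕ → MForm → MForm
  | 0, a => a
  | n + 1, a => .box (boxIter n a)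

/-- A Kripke model for modal logic. -/
structure MModel where
  W : Type
  R : W → W → Prop
  val : ℕ → W → Prop

/-- The (classical) modal forcing relation. -/
def MModel.Forces (M : MModel) : M.W → MForm → Prop
  | w, .var p => M.val p w
  | _, .bot => False
  | w, .and a b => M.Forces w a ∧ M.Forces w b
  | w, .imp a b => M.Forces w a → M.Forces w b
  | w, .box a => ∀ v, M.R w v → M.Forces v a

/-- The global consequence relation of the modal logic K. -/
def GlobalK (φ θ : MForm) : Prop :=
  ∀ M : MModel, (∀ w, M.Forces w φ) → ∀ w, M.Forces w θ

/-- The conjunction ⋀_{k=0}^{N} (q → □^k r). -/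
def chainForm (q r : ℕ) : ℕ → MForm
  | 0 => .imp (.var q) (.var r)
  | N + 1 => .and (chainForm q r N) (.imp (.var q) (boxIter (N + 1) (.var r)))

/-- The formula φ := (q → p) ∧ (p → □p) ∧ (p → r). -/
def phiK (p q r : ℕ) : MForm :=
  .and (.and (.imp (.var q) (.var p)) (.imp (.var p) (.box (.var p))))
    (.imp (.var p) (.var r))

/-- The line `0 → 1 → 2 → ⋯` with `q` true only at `0` and `r` true exactly up to `N`. -/
def lineModel (q r N : ℕ) : MModel where
  W := ℕ
  R w v := v = w + 1
  val x w := (x = q ∧ w = 0) ∨ (x = r ∧ w ≤ N)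

theorem lineModel_forces_boxIter (q r N : ℕ) (a : MForm) (k : ℕ) (w : ℕ) :
    (lineModel q r N).Forces w (boxIter k a) ↔ (lineModel q r N).Forces (w + k : ℕ) a := by
  induction k generalizing w with
  | zero => exact Iff.rfl
  | succ k ih =>
    have step : (lineModel q r N).Forces w (boxIter (k + 1) a) ↔
        (lineModel q r N).Forces (w + 1 : ℕ) (boxIter k a) :=
      ⟨fun h => h (w + 1 : ℕ) rfl, fun h v hv => by
        obtain rfl : v = (w + 1 : ℕ) := hv
        exact h⟩
    rw [step, ih (w + 1), show w + 1 + k = w + (k + 1) by omega]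

/-- The bound `n ≤ N` lets the conjunction be handled by induction on its length `n` in the
fixed model of parameter `N`. -/
theorem lineModel_forces_chainForm (q r N : ℕ) (hqr : q ≠ r) (w n : ℕ) (hn : n ≤ N) :
    (lineModel q r N).Forces w (chainForm q r n) := by
  have conjunct (k : ℕ) (hk : k ≤ N) :
      (lineModel q r N).Forces w (.imp (.var q) (boxIter k (.var r))) := by
    intro hq
    rw [lineModel_forces_boxIter]
    rcases hq with ⟨_, hw⟩ | ⟨h, _⟩
    · exact Or.inr ⟨rfl, show w + k ≤ N by omega⟩
    · exact absurd h hqr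
  induction n with
  | zero => exact conjunct 0 hn
  | succ n ih => exact ⟨ih (by omega), conjunct (n + 1) hn⟩

/-- **A countermodel claim in modal logic K.** For every N,
⋀_{k=0}^{N} (q → □^k r) does not globally K-entail q → □^{N+1} r. -/
theorem chain_not_entails_next (q r : ℕ) (hqr : q ≠ r) (N : ℕ) :
    ¬ GlobalK (chainForm q r N) (.imp (.var q) (boxIter (N + 1) (.var r))) := by
  intro h
  have h0 := h (lineModel q r N)
    (fun w => lineModel_forces_chainForm q r N hqr w N le_rfl) (0 : ℕ) (Or.inl ⟨rfl, rfl⟩)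
  rw [lineModel_forces_boxIter] at h0
  rcases h0 with ⟨h, _⟩ | ⟨_, h⟩
  · exact hqr h.symm
  · have h' : 0 + (N + 1) ≤ N := h
    omega
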